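/- Let A be a semisimple unital complex Banach algebra. Then there exists a set P of projections of A, each of rank at most 1, such that: (i) for distinct p, q ∈ P the two-sided ideals J_p and J_q are orthogonal, i.e. u·v = 0 and v·u = 0 for all u ∈ J_p and v ∈ J_q; and (ii) every finite-rank element of A can be written as a finite sum of elements each of which belongs to J_p for some p ∈ P. -/

import Mathlib

open scoped ENNReal

/-- The spectral rank of an element of a complex algebra:
`rank a = sup_{x ∈ A} #σ'(x·a)`. -/
noncomputable def spectralRank {A : Type*} [Ring A] [Algebra ℂ A] (a : A) : ℕ∞ :=
  ⨆ x : A, ((spectrum ℂ (x * a)) \ {0}).encard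

/-- The two-sided ideal generated by `p`: all finite sums `∑ xⱼ·p·yⱼ`. -/
def idealGen {A : Type*} [Ring A] (p : A) : Set A :=
  {a : A | ∃ (n : ℕ) (x y : Fin n → A), a = ∑ j, x j * p * y j}

/-!
In a semisimple Banach algebra every nonzero left ideal generated by a finite-rank element `a`
contains a nonzero projection, a Riesz idempotent of some `x * a` with nonzero spectrum. Multiplying
by `1 - p` for such a projection `p` strictly lowers the rank of `a`, so a projection of least rank
in `A * a` has rank one, and peeling off the terms of `a = a * p + a * (1 - p)` writes `a` as a
finite sum of left multiples of rank-one projections. If `p * x * q ≠ 0` for rank-one projections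
`p` and `q`, then each lies in the ideal generated by the other; hence distinct ideals of this kind
are orthogonal, and it suffices to choose one projection for each ideal.

The Riesz idempotents are obtained without contour integrals: in a commutative closed subalgebra an
interpolation polynomial gives an element that is idempotent modulo the radical, and the idempotent
is lifted by solving a quadratic equation with the Catalan series.
-/

open Filter Polynomial WeakDual
open scoped NNReal

section SpectralRadius

variable {A : Type*} [NormedRing A] [NormedAlgebra ℂ A] [CompleteSpace A] {a : A}

theorem eventually_nnnorm_pow_le_of_spectralRadius_lt {r : ℝ≥0} (h : spectralRadius ℂ a < r) :
    ∀ᶠ n : ℕ in atTop, ‖a ^ n‖₊ ≤ r ^ n := by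
  have htendsto := spectrum.pow_nnnorm_pow_one_div_tendsto_nhds_spectralRadius a
  filter_upwards [htendsto.eventually_lt_const h, eventually_ne_atTop 0] with n hn hn0
  rw [one_div, ENNReal.rpow_inv_lt_iff (by positivity), ENNReal.rpow_natCast] at hn
  exact_mod_cast hn.le

theorem catalan_le_four_pow (n : ℕ) : catalan n ≤ 4 ^ n := by
  rw [catalan_eq_centralBinom_div]
  exact (Nat.div_le_self _ _).trans n.centralBinom_le_four_pow

theorem summable_norm_catalan_smul_pow (h : spectralRadius ℂ a < 1 / 4) :
    Summable fun n ↦ ‖catalan n • a ^ n‖ := by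
  obtain ⟨r, har, hr⟩ := ENNReal.lt_iff_exists_nnreal_btwn.1 h
  have hr' : 4 * r < 1 := by
    rw [ENNReal.lt_div_iff_mul_lt (by simp) (by simp)] at hr
    rw [mul_comm]
    exact_mod_cast hr
  have hgeom := summable_geometric_of_lt_one (by positivity) (NNReal.coe_lt_one.2 hr')
  refine hgeom.of_norm_bounded_eventually_nat ?_
  filter_upwards [eventually_nnnorm_pow_le_of_spectralRadius_lt har] with n hn
  calc ‖‖catalan n • a ^ n‖‖ ≤ catalan n * ‖a ^ n‖ := by
        rw [norm_norm]
        exact norm_nsmul_le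
    _ ≤ 4 ^ n * r ^ n := by
        gcongr
        · exact_mod_cast catalan_le_four_pow n
        · exact_mod_cast hn
    _ = (4 * r : ℝ≥0) ^ n := by rw [← mul_pow]; push_cast; rfl

-- The solution is the Catalan generating function evaluated at `a`.
theorem exists_eq_one_add_mul_sq (h : spectralRadius ℂ a < 1 / 4) :
    ∃ s : A, s = 1 + a * s ^ 2 := by
  have hsum := summable_norm_catalan_smul_pow h
  refine ⟨∑' n, catalan n • a ^ n, ?_⟩
  rw [sq, tsum_mul_tsum_eq_tsum_sum_antidiagonal_of_summable_norm hsum hsum,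
    ← (summable_norm_sum_mul_antidiagonal_of_summable_norm hsum hsum).of_norm.tsum_mul_left,
    hsum.of_norm.tsum_eq_zero_add, catalan_zero, pow_zero, one_smul]
  congr! 3 with n
  rw [catalan_succ', Finset.sum_smul, Finset.mul_sum]
  refine Finset.sum_congr rfl fun ij hij ↦ ?_
  rw [smul_mul_smul_comm, ← pow_add, Finset.HasAntidiagonal.mem_antidiagonal.1 hij, mul_smul_comm,
    pow_succ']

end SpectralRadius

section RieszIdempotent

-- With `c = u ^ 2 - u` and `y = c * w * s`, the right-hand side solves `y ^ 2 - y = -c * w`, while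
-- `e = u + (1 - 2 * u) * y` satisfies `e ^ 2 - e = c + (1 + 4 * c) * (y ^ 2 - y)`.
theorem isIdempotentElem_add_mul_of_eq_one_add_mul_sq {R : Type*} [CommRing R] {u w s : R}
    (hw : (1 + 4 * (u ^ 2 - u)) * w = 1) (hs : s = 1 + (u ^ 2 - u) * w * s ^ 2) :
    IsIdempotentElem (u + (1 - 2 * u) * ((u ^ 2 - u) * w * s)) := by
  rw [IsIdempotentElem]
  linear_combination
    (-(1 + 4 * (u ^ 2 - u)) * (u ^ 2 - u) * w) * hs - (u ^ 2 - u) * hw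

section Commutative

variable {B : Type*} [NormedCommRing B] [NormedAlgebra ℂ B] [CompleteSpace B]

theorem spectralRadius_eq_zero_of_forall_character {c : B}
    (hc : ∀ φ : characterSpace ℂ B, φ c = 0) : spectralRadius ℂ c = 0 := by
  refine ENNReal.iSup_eq_zero.2 fun z ↦ ENNReal.iSup_eq_zero.2 fun hz ↦ ?_
  obtain ⟨φ, rfl⟩ := CharacterSpace.mem_spectrum_iff_exists.1 hz
  simp [hc φ]

theorem exists_isIdempotentElem_forall_character_eq {u : B}
    (hu : ∀ φ : characterSpace ℂ B, IsIdempotentElem (φ u)) :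
    ∃ e : B, IsIdempotentElem e ∧ ∀ φ : characterSpace ℂ B, φ e = φ u := by
  have hc (φ : characterSpace ℂ B) : φ (u ^ 2 - u) = 0 := by
    rw [map_sub, map_pow, sq, (hu φ).eq, sub_self]
  have hunit : IsUnit (1 + 4 * (u ^ 2 - u)) := by
    by_contra h
    obtain ⟨φ, hφ⟩ := CharacterSpace.exists_apply_eq_zero h
    rw [map_add, map_mul, hc, mul_zero, add_zero, map_one] at hφ
    exact one_ne_zero hφ
  obtain ⟨w, hw⟩ := hunit.exists_right_inv
  have hradius : spectralRadius ℂ ((u ^ 2 - u) * w) = 0 :=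
    spectralRadius_eq_zero_of_forall_character fun φ ↦ by rw [map_mul, hc, zero_mul]
  obtain ⟨s, hs⟩ := exists_eq_one_add_mul_sq (hradius.trans_lt (by simp))
  exact ⟨_, isIdempotentElem_add_mul_of_eq_one_add_mul_sq hw hs, fun φ ↦ by
    simp only [map_add, map_mul, hc, zero_mul, mul_zero, add_zero]⟩

theorem exists_isIdempotentElem_character_eq_indicator {b : B} (hb : (spectrum ℂ b).Finite)
    (S : Set ℂ) :
    ∃ e : B, IsIdempotentElem e ∧ ∀ φ : characterSpace ℂ B, φ e = S.indicator 1 (φ b) := by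
  classical
  let h : ℂ[X] := Lagrange.interpolate hb.toFinset id (S.indicator 1)
  have hφ (φ : characterSpace ℂ B) : φ (aeval b h) = S.indicator 1 (φ b) := by
    have hmem : φ b ∈ hb.toFinset := hb.mem_toFinset.2 (AlgHom.apply_mem_spectrum φ b)
    rw [← aeval_algHom_apply, coe_aeval_eq_eval]
    exact Lagrange.eval_interpolate_at_node _ Function.injective_id.injOn hmem
  obtain ⟨e, he, heφ⟩ := exists_isIdempotentElem_forall_character_eq (u := aeval b h) fun φ ↦ by
    rw [hφ]
    by_cases hS : φ b ∈ S <;> simp [hS, IsIdempotentElem]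
  exact ⟨e, he, fun φ ↦ (heφ φ).trans (hφ φ)⟩

theorem exists_isIdempotentElem_spectrum_mul_subset_of_commRing {b : B}
    (hb : (spectrum ℂ b).Finite) {l : ℂ} (hl : l ∈ spectrum ℂ b) (hl0 : l ≠ 0) :
    ∃ e v : B, IsIdempotentElem e ∧ e ≠ 0 ∧ e = b * v ∧ spectrum ℂ (e * b) ⊆ {0, l} := by
  obtain ⟨e, he, hφ⟩ := exists_isIdempotentElem_character_eq_indicator hb {l}
  have hunit : IsUnit (b * e + (1 - e)) := by
    by_contra h
    obtain ⟨φ, h⟩ := CharacterSpace.exists_apply_eq_zero h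
    by_cases hφl : φ b = l <;> simp_all
  obtain ⟨w, hw⟩ := hunit.exists_right_inv
  refine ⟨e, e * w, he, ?_, ?_, ?_⟩
  · rintro rfl
    obtain ⟨φ, rfl⟩ := CharacterSpace.mem_spectrum_iff_exists.1 hl
    simpa using hφ φ
  · linear_combination (b * w - w) * he.eq - e * hw
  · intro z hz
    obtain ⟨φ, rfl⟩ := CharacterSpace.mem_spectrum_iff_exists.1 hz
    by_cases hφl : φ b = l <;> simp [hφ, hφl]

end Commutative

variable {A : Type*} [NormedRing A] [NormedAlgebra ℂ A] [CompleteSpace A]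

theorem exists_isIdempotentElem_spectrum_mul_subset {b : A}
    (hb : (spectrum ℂ b).Finite) {l : ℂ} (hl : l ∈ spectrum ℂ b) (hl0 : l ≠ 0) :
    ∃ e v : A, IsIdempotentElem e ∧ e ≠ 0 ∧ e = b * v ∧ e = v * b ∧
      spectrum ℂ (e * b) ⊆ {0, l} := by
  let B := Algebra.elemental ℂ b
  let _ : NormedCommRing B := { (inferInstance : NormedRing B) with mul_comm := mul_comm }
  let b' : B := ⟨b, Algebra.elemental.self_mem ℂ b⟩
  have hspec : spectrum ℂ b' = spectrum ℂ b :=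
    Subalgebra.spectrum_eq_of_isPreconnected_compl B b'
      (hb.countable.isConnected_compl_of_one_lt_rank (by simp)).isPreconnected
  obtain ⟨e, v, he, he0, hev, hsub⟩ :=
    exists_isIdempotentElem_spectrum_mul_subset_of_commRing (b := b') (hspec ▸ hb) (hspec ▸ hl) hl0
  exact ⟨e, v, congrArg Subtype.val he.eq, fun h ↦ he0 (Subtype.ext h), congrArg Subtype.val hev,
    congrArg Subtype.val (hev.trans (mul_comm _ _)),
    (spectrum.subset_subalgebra (e * b')).trans hsub⟩

end RieszIdempotent

section Spectrum

variable {𝕜 R : Type*} [Field 𝕜] [Ring R] [Algebra 𝕜 R] {p : R}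

theorem mem_spectrum_of_mul_eq_smul {b : R} {l : 𝕜} (hp0 : p ≠ 0) (hpb : p * b = l • p) :
    l ∈ spectrum 𝕜 b := fun h ↦ by
  refine hp0 (h.mul_left_eq_zero.1 ?_)
  rw [mul_sub, hpb, Algebra.algebraMap_eq_smul_one, mul_smul_comm, mul_one, sub_self]

theorem isUnit_one_add_smul {c : 𝕜} (hp : IsIdempotentElem p) (hc : 1 + c ≠ 0) :
    IsUnit (1 + c • p) := by
  refine isUnit_iff_exists.2 ⟨1 - (c / (1 + c)) • p, ?_, ?_⟩
  all_goals
    simp only [mul_sub, sub_mul, add_mul, mul_add, mul_one, one_mul, smul_mul_assoc, mul_smul_comm,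
      hp.eq]
    match_scalars
    · simp
    · field_simp
      ring

-- `s - (1 - p) * b` and `s - b` differ by the invertible factor `1 + (l / (s - l)) • p`, because
-- `p * (s - b) = (s - l) • p`.
theorem mem_spectrum_of_mem_spectrum_one_sub_mul {b : R} {l s : 𝕜} (hp : IsIdempotentElem p)
    (hpb : p * b = l • p) (hs : s ∈ spectrum 𝕜 ((1 - p) * b)) (hs0 : s ≠ 0) (hsl : s ≠ l) :
    s ∈ spectrum 𝕜 b := by
  have hsl' : s - l ≠ 0 := sub_ne_zero.2 hsl
  have hp_mul : p * (algebraMap 𝕜 R s - b) = (s - l) • p := by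
    rw [mul_sub, hpb, Algebra.algebraMap_eq_smul_one, mul_smul_comm, mul_one, sub_smul]
  have hfactor : algebraMap 𝕜 R s - (1 - p) * b =
      (1 + (l / (s - l)) • p) * (algebraMap 𝕜 R s - b) := by
    rw [add_mul, one_mul, smul_mul_assoc, hp_mul, smul_smul, div_mul_cancel₀ _ hsl', sub_mul,
      one_mul, hpb]
    abel
  have hunit : IsUnit (1 + (l / (s - l)) • p) :=
    isUnit_one_add_smul hp (by rw [one_add_div hsl', sub_add_cancel]; exact div_ne_zero hs0 hsl')
  rw [spectrum.mem_iff, hfactor] at hs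
  exact fun h ↦ hs (hunit.mul h)

end Spectrum

section SpectralRank

variable {A : Type*} [Ring A] [Algebra ℂ A] {a p : A}

theorem encard_spectrum_mul_diff_zero_le_spectralRank (x a : A) :
    (spectrum ℂ (x * a) \ {0}).encard ≤ spectralRank a :=
  le_iSup (fun x ↦ (spectrum ℂ (x * a) \ {0}).encard) x

theorem spectralRank_mul_le (x a : A) : spectralRank (x * a) ≤ spectralRank a :=
  iSup_le fun y ↦ by
    rw [← mul_assoc]
    exact encard_spectrum_mul_diff_zero_le_spectralRank (y * x) a

theorem finite_spectrum_mul_of_spectralRank_lt_top (ha : spectralRank a < ⊤) (x : A) :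
    (spectrum ℂ (x * a)).Finite :=
  .of_sdiff (Set.encard_lt_top_iff.1
    ((encard_spectrum_mul_diff_zero_le_spectralRank x a).trans_lt ha)) (Set.finite_singleton 0)

theorem one_le_spectralRank (hp : IsIdempotentElem p) (hp0 : p ≠ 0) : 1 ≤ spectralRank p := by
  have hmem : (1 : ℂ) ∈ spectrum ℂ (1 * p) \ {0} :=
    ⟨mem_spectrum_of_mul_eq_smul hp0 (by rw [one_mul, hp.eq, one_smul]), one_ne_zero⟩
  exact (Set.one_le_encard_iff_nonempty.2 ⟨1, hmem⟩).trans
    (encard_spectrum_mul_diff_zero_le_spectralRank 1 p)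

-- If `p = x * a` and `l` is a new scalar, then `b = (1 - p) * y * a + l • p` is a left multiple of
-- `a` whose spectrum contains both `l` and the nonzero spectrum of `y * (a * (1 - p))`.
theorem spectralRank_mul_one_sub_lt (ha : spectralRank a < ⊤) (hp : IsIdempotentElem p)
    (hp0 : p ≠ 0) (hpa : ∃ x, p = x * a) : spectralRank (a * (1 - p)) < spectralRank a := by
  obtain ⟨x, hx⟩ := hpa
  suffices hle : spectralRank (a * (1 - p)) + 1 ≤ spectralRank a from
    (ENat.add_one_le_iff fun h ↦ by simp [h, ha.ne] at hle).1 hle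
  rw [spectralRank, ENat.iSup_add]
  refine iSup_le fun y ↦ ?_
  obtain ⟨l, hl⟩ :=
    ((finite_spectrum_mul_of_spectralRank_lt_top ha ((1 - p) * y)).insert 0).exists_notMem
  obtain ⟨hl0, hlS⟩ : l ≠ 0 ∧ l ∉ spectrum ℂ ((1 - p) * y * a) := by simpa using hl
  let b := ((1 - p) * y + l • x) * a
  have hb : b = (1 - p) * (y * a) + l • p := by
    rw [hx, ← smul_mul_assoc, ← mul_assoc, ← add_mul, ← hx]
  have hpb : p * b = l • p := by
    rw [hb, mul_add, ← mul_assoc, hp.mul_one_sub_self, zero_mul, zero_add, mul_smul_comm, hp.eq]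
  have hqb : (1 - p) * b = (1 - p) * y * a := by
    rw [hb, mul_add, ← mul_assoc, hp.one_sub.eq, mul_smul_comm, hp.one_sub_mul_self, smul_zero,
      add_zero, mul_assoc]
  have hsub : insert l (spectrum ℂ ((1 - p) * y * a) \ {0}) ⊆ spectrum ℂ b \ {0} := by
    rintro s (rfl | ⟨hs, hs0⟩)
    · exact ⟨mem_spectrum_of_mul_eq_smul hp0 hpb, hl0⟩
    · have hsl : s ≠ l := fun h ↦ hlS (h ▸ hs)
      exact ⟨mem_spectrum_of_mem_spectrum_one_sub_mul hp hpb (hqb ▸ hs) hs0 hsl, hs0⟩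
  calc (spectrum ℂ (y * (a * (1 - p))) \ {0}).encard + 1
      = (spectrum ℂ ((1 - p) * y * a) \ {0}).encard + 1 := by
        rw [← mul_assoc, spectrum.nonzero_mul_comm, mul_assoc]
    _ = (insert l (spectrum ℂ ((1 - p) * y * a) \ {0})).encard :=
        (Set.encard_insert_of_notMem fun h ↦ hlS h.1).symm
    _ ≤ (spectrum ℂ b \ {0}).encard := Set.encard_le_encard hsub
    _ ≤ spectralRank a := encard_spectrum_mul_diff_zero_le_spectralRank _ a

theorem spectralRank_lt_of_mul_eq {e : A} (hrank : spectralRank p < ⊤) (hp : IsIdempotentElem p)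
    (he : IsIdempotentElem e) (hpe : p * e = e) (hep : e * p = e) (hne : e ≠ p) :
    spectralRank e < spectralRank p := by
  have hsub : p * (1 - (p - e)) = e := by rw [mul_sub, mul_sub, mul_one, hp.eq, hpe]; abel
  have hidem : IsIdempotentElem (p - e) := he.sub hp hep hpe
  simpa only [hsub] using spectralRank_mul_one_sub_lt hrank hidem (sub_ne_zero.2 hne.symm)
    ⟨1 - e, by rw [sub_mul, one_mul, hep]⟩

end SpectralRank

/-- A projection of spectral rank one: since a nonzero projection has rank at least `1`, it is
enough to bound the rank from above. -/
structure IsRankOneProjection {A : Type*} [Ring A] [Algebra ℂ A] (p : A) : Prop where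
  isIdempotentElem : IsIdempotentElem p
  ne_zero : p ≠ 0
  spectralRank_le_one : spectralRank p ≤ 1

theorem IsRankOneProjection.eq_of_mul_eq {A : Type*} [Ring A] [Algebra ℂ A] {p e : A}
    (hp : IsRankOneProjection p) (he : IsIdempotentElem e) (he0 : e ≠ 0) (hpe : p * e = e)
    (hep : e * p = e) : e = p := by
  by_contra hne
  have hlt := spectralRank_lt_of_mul_eq (hp.spectralRank_le_one.trans_lt (by simp))
    hp.isIdempotentElem he hpe hep hne
  exact ((one_le_spectralRank he he0).trans_lt hlt).not_ge hp.spectralRank_le_one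

section Semisimple

/-- Semisimplicity of a complex Banach algebra, in the spectral characterization of the Jacobson
radical: it consists of the `a` such that every `x * a` is quasinilpotent. -/
def SpectrallySemisimple (A : Type*) [NormedRing A] [NormedAlgebra ℂ A] : Prop :=
  ∀ a : A, (∀ x : A, spectralRadius ℂ (x * a) = 0) → a = 0

variable {A : Type*} [NormedRing A] [NormedAlgebra ℂ A]

theorem SpectrallySemisimple.exists_mem_spectrum_mul_ne_zero (hA : SpectrallySemisimple A) {a : A}
    (ha0 : a ≠ 0) : ∃ x : A, ∃ l ∈ spectrum ℂ (x * a), l ≠ 0 := by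
  by_contra! h
  refine ha0 (hA a fun x ↦ ENNReal.iSup_eq_zero.2 fun l ↦ ENNReal.iSup_eq_zero.2 fun hl ↦ ?_)
  simp [h x l hl]

variable [CompleteSpace A] {a p : A}

theorem SpectrallySemisimple.exists_isIdempotentElem_eq_mul (hA : SpectrallySemisimple A)
    (ha : spectralRank a < ⊤) (ha0 : a ≠ 0) :
    ∃ e : A, IsIdempotentElem e ∧ e ≠ 0 ∧ ∃ x, e = x * a := by
  obtain ⟨y, l, hl, hl0⟩ := hA.exists_mem_spectrum_mul_ne_zero ha0
  obtain ⟨e, v, he, he0, -, hev, -⟩ := exists_isIdempotentElem_spectrum_mul_subset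
    (finite_spectrum_mul_of_spectralRank_lt_top ha y) hl hl0
  exact ⟨e, he, he0, v * y, by rw [hev, mul_assoc]⟩

theorem spectralRank_le_one_of_forall_mul_eq (hrank : spectralRank p < ⊤)
    (hp : IsIdempotentElem p)
    (hprim : ∀ e : A, IsIdempotentElem e → e ≠ 0 → p * e = e → e * p = e → e = p) :
    spectralRank p ≤ 1 := by
  refine iSup_le fun y ↦ ?_
  have hcorner : spectrum ℂ (y * p) \ {0} = spectrum ℂ (p * y * p) \ {0} := by
    rw [← hp.eq, ← mul_assoc, spectrum.nonzero_mul_comm, ← mul_assoc, hp.eq]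
  rw [hcorner, Set.encard_le_one_iff_subsingleton]
  rintro l ⟨hl, hl0⟩ m ⟨hm, hm0⟩
  obtain ⟨e, v, he, he0, hev, hev', hspec⟩ := exists_isIdempotentElem_spectrum_mul_subset
    (finite_spectrum_mul_of_spectralRank_lt_top hrank (p * y)) hl hl0
  have hpe : p * e = e := by rw [hev]; simp only [← mul_assoc, hp.eq]
  have hep : e * p = e := by rw [hev']; simp only [mul_assoc, hp.eq]
  obtain rfl := hprim e he he0 hpe hep
  rw [← mul_assoc, ← mul_assoc, hp.eq] at hspec
  exact ((hspec hm).resolve_left hm0).symm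

theorem SpectrallySemisimple.exists_isRankOneProjection_eq_mul (hA : SpectrallySemisimple A)
    (ha : spectralRank a < ⊤) (ha0 : a ≠ 0) :
    ∃ p : A, IsRankOneProjection p ∧ ∃ x, p = x * a := by
  obtain ⟨p, ⟨hp, hp0, x, hx⟩, hmin⟩ :=
    exists_minimalFor_of_wellFoundedLT _ spectralRank (hA.exists_isIdempotentElem_eq_mul ha ha0)
  have hrank : spectralRank p < ⊤ := hx ▸ (spectralRank_mul_le x a).trans_lt ha
  refine ⟨p, ⟨hp, hp0, spectralRank_le_one_of_forall_mul_eq hrank hp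
    fun e he he0 hpe hep ↦ ?_⟩, x, hx⟩
  by_contra hne
  have hlt := spectralRank_lt_of_mul_eq hrank hp he hpe hep hne
  exact hlt.not_ge (hmin ⟨he, he0, e * x, by rw [mul_assoc, ← hx, hep]⟩ hlt.le)

theorem SpectrallySemisimple.exists_eq_sum_mul_isRankOneProjection (hA : SpectrallySemisimple A)
    (ha : spectralRank a < ⊤) :
    ∃ (m : ℕ) (x p : Fin m → A), (∀ j, IsRankOneProjection (p j)) ∧ a = ∑ j, x j * p j := by
  induction hr : spectralRank a using WellFoundedLT.induction generalizing a with
  | ind r ih =>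
    obtain rfl | ha0 := eq_or_ne a 0
    · exact ⟨0, Fin.elim0, Fin.elim0, fun j ↦ j.elim0, by simp⟩
    obtain ⟨p, hp, hpa⟩ := hA.exists_isRankOneProjection_eq_mul ha ha0
    have hlt := spectralRank_mul_one_sub_lt ha hp.isIdempotentElem hp.ne_zero hpa
    obtain ⟨m, y, q, hq, hsum⟩ := ih _ (hr ▸ hlt) (hlt.trans ha) rfl
    refine ⟨m + 1, Fin.cons a y, Fin.cons p q, Fin.cons hp hq, ?_⟩
    simp only [Fin.sum_univ_succ, Fin.cons_zero, Fin.cons_succ, ← hsum]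
    rw [mul_sub, mul_one, add_sub_cancel]

theorem IsRankOneProjection.exists_eq_mul (hA : SpectrallySemisimple A)
    (hp : IsRankOneProjection p) {b : A} (hb0 : b ≠ 0) (hbp : b * p = b) : ∃ x, p = x * b := by
  have hb : spectralRank b < ⊤ := hbp ▸
    (spectralRank_mul_le b p).trans_lt (hp.spectralRank_le_one.trans_lt (by simp))
  obtain ⟨g, hg, hg0, x, hx⟩ := hA.exists_isIdempotentElem_eq_mul hb hb0
  have hgp : g * p = g := by rw [hx, mul_assoc, hbp]
  have hpg : IsIdempotentElem (p * g) := by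
    rw [IsIdempotentElem, mul_assoc, ← mul_assoc g, hgp, hg.eq]
  have hpg0 : p * g ≠ 0 := fun h ↦ hg0 <| by
    rw [← hg.eq]
    nth_rw 1 [← hgp]
    rw [mul_assoc, h, mul_zero]
  have heq : p * g = p := hp.eq_of_mul_eq hpg hpg0
    (by rw [← mul_assoc, hp.isIdempotentElem.eq]) (by rw [mul_assoc, hgp])
  exact ⟨p * x, by rw [mul_assoc, ← hx, heq]⟩

end Semisimple

section IdealGen

variable {R : Type*} [Ring R]

theorem mul_mem_idealGen (x p : R) : x * p ∈ idealGen p :=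
  ⟨1, fun _ ↦ x, fun _ ↦ 1, by simp⟩

theorem idealGen_mul_mul_subset (y p z : R) : idealGen (y * p * z) ⊆ idealGen p := by
  rintro _ ⟨n, x, w, rfl⟩
  exact ⟨n, fun j ↦ x j * y, fun j ↦ z * w j, by simp only [mul_assoc]⟩

theorem mul_eq_zero_of_mem_idealGen {p q u v : R} (h : ∀ x, p * x * q = 0)
    (hu : u ∈ idealGen p) (hv : v ∈ idealGen q) : u * v = 0 := by
  obtain ⟨n, x, y, rfl⟩ := hu
  obtain ⟨m, x', y', rfl⟩ := hv
  rw [Finset.sum_mul_sum]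
  refine Finset.sum_eq_zero fun i _ ↦ Finset.sum_eq_zero fun j _ ↦ ?_
  calc x i * p * y i * (x' j * q * y' j) = x i * (p * (y i * x' j) * q) * y' j := by
        simp only [mul_assoc]
    _ = 0 := by rw [h, mul_zero, zero_mul]

variable {A : Type*} [NormedRing A] [NormedAlgebra ℂ A] [CompleteSpace A] {p q : A}

theorem IsRankOneProjection.idealGen_subset (hA : SpectrallySemisimple A)
    (hq : IsRankOneProjection q) {x : A} (hx : p * x * q ≠ 0) : idealGen q ⊆ idealGen p := by
  obtain ⟨y, hy⟩ := hq.exists_eq_mul hA hx (by rw [mul_assoc, hq.isIdempotentElem.eq])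
  have hqp : y * p * (x * q) = q := by simpa only [mul_assoc] using hy.symm
  exact hqp ▸ idealGen_mul_mul_subset y p (x * q)

theorem IsRankOneProjection.mul_mul_ne_zero_symm (hA : SpectrallySemisimple A)
    (hq : IsRankOneProjection q) {x : A} (hx : p * x * q ≠ 0) : ∃ y, q * y * p ≠ 0 := by
  obtain ⟨y, hy⟩ := hq.exists_eq_mul hA hx (by rw [mul_assoc, hq.isIdempotentElem.eq])
  refine ⟨y, fun h ↦ hq.ne_zero ?_⟩
  calc q = q * q := hq.isIdempotentElem.eq.symm
    _ = q * (y * (p * x * q)) := by rw [← hy]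
    _ = q * y * p * (x * q) := by simp only [mul_assoc]
    _ = 0 := by rw [h, zero_mul]

theorem IsRankOneProjection.idealGen_eq (hA : SpectrallySemisimple A) (hp : IsRankOneProjection p)
    (hq : IsRankOneProjection q) {x : A} (hx : p * x * q ≠ 0) : idealGen p = idealGen q := by
  obtain ⟨y, hy⟩ := hq.mul_mul_ne_zero_symm hA hx
  exact (hp.idealGen_subset hA hy).antisymm (hq.idealGen_subset hA hx)

theorem IsRankOneProjection.mul_eq_zero_of_idealGen_ne (hA : SpectrallySemisimple A)
    (hp : IsRankOneProjection p) (hq : IsRankOneProjection q) (hne : idealGen p ≠ idealGen q)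
    {u v : A} (hu : u ∈ idealGen p) (hv : v ∈ idealGen q) : u * v = 0 :=
  mul_eq_zero_of_mem_idealGen
    (fun _ ↦ by_contra fun hx ↦ hne (hp.idealGen_eq hA hq hx)) hu hv

end IdealGen

theorem stmt9 {A : Type*} [NormedRing A] [NormedAlgebra ℂ A] [CompleteSpace A]
    (hss : ∀ a : A, (∀ x : A, spectralRadius ℂ (x * a) = 0) → a = 0) :
    ∃ P : Set A,
      (∀ p ∈ P, p * p = p ∧ spectralRank p ≤ 1) ∧
      (∀ p ∈ P, ∀ q ∈ P, p ≠ q →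
        ∀ u ∈ idealGen p, ∀ v ∈ idealGen q, u * v = 0 ∧ v * u = 0) ∧
      (∀ a : A, spectralRank a < ⊤ →
        ∃ (m : ℕ) (g : Fin m → A),
          (∀ j, ∃ p ∈ P, g j ∈ idealGen p) ∧ a = ∑ j, g j) := by
  have hA : SpectrallySemisimple A := hss
  obtain ⟨P, hP, hbij⟩ := Set.exists_subset_bijOn {p : A | IsRankOneProjection p} idealGen
  refine ⟨P, fun p hp ↦ ?_, fun p hp q hq hne u hu v hv ↦ ?_, fun a ha ↦ ?_⟩
  · exact ⟨(hP hp).isIdempotentElem, (hP hp).spectralRank_le_one⟩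
  · have hJ : idealGen p ≠ idealGen q := hbij.injOn.ne hp hq hne
    exact ⟨(hP hp).mul_eq_zero_of_idealGen_ne hA (hP hq) hJ hu hv,
      (hP hq).mul_eq_zero_of_idealGen_ne hA (hP hp) hJ.symm hv hu⟩
  · obtain ⟨m, x, q, hq, hsum⟩ := hA.exists_eq_sum_mul_isRankOneProjection ha
    refine ⟨m, fun j ↦ x j * q j, fun j ↦ ?_, hsum⟩
    obtain ⟨p, hp, hJ⟩ := hbij.surjOn ⟨q j, hq j, rfl⟩
    exact ⟨p, hp, hJ ▸ mul_mem_idealGen (x j) (q j)⟩
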